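/- Fix a real α > 2, a real β > 0, and a natural number m ≥ 1. Then there exist constants c > 0 and y₀ > 2, depending only on m, α, β, such that for every real y ≥ y₀ the iterated contour integral I := (1/(2πi))^{2m} ∫_{(1/log y)^{2m}} [∏_{1≤i,j≤m} ζ^{β}(1 + z_i + z_{m+j})] · y^{z₁+⋯+z_{2m}} / (z₁^{α}⋯z_{2m}^{α}) dz₁⋯dz_{2m} — where each z_i runs over the vertical line Re(z_i) = 1/log y — is a real number and satisfies I ≥ c · (log y)^{γ}, where γ = 2mα + m²β − 2m. -/

import Mathlib

open Complex Finset MeasureTheory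

/-- `log ζ(s) = ∑_{n ≥ 2} Λ(n)/(log n · n^s)` for `Re s > 1`. -/
noncomputable def logZeta (s : ℂ) : ℂ :=
  ∑' n : ℕ, ((ArithmeticFunction.vonMangoldt n / Real.log n : ℝ) : ℂ) * (n : ℂ) ^ (-s)

/-- `ζ^β(s) = exp(β log ζ(s))` for real `β` and `Re s > 1`. -/
noncomputable def zetaPow (β : ℝ) (s : ℂ) : ℂ := Complex.exp ((β : ℂ) * logZeta s)

/-!
For `Re w ≥ 0`, `ζ^β(1 + 2δ + w)` is the Laplace transform at `w` of a positive measure on the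
half-line: `log ζ` has nonnegative coefficients, and exponentiating it amounts to taking the
exponential of a measure under convolution. On the lines `zᵢ = δ + i tᵢ`, `wⱼ = δ + i sⱼ` with
`δ = 1 / log y`, inserting these measures turns the product of zeta factors into an integral over
`u = (u i j) ≥ 0` of the characters `exp(-i ∑ (tᵢ + sⱼ) u i j)`. By Fubini the contour integrals
separate, and each is an inverse Laplace transform `e^{δv} (log y - v)₊^{α-1} / Γ(α)` at a row or
column sum `v` of `u`. Hence the integral is real with a nonnegative integrand in `u`. On the box
where every coordinate is at most a small multiple of `log y`, these densities are
`≫ (log y)^{α-1}`, while `ζ(s) ~ 1 / (s - 1)` and a Chernoff-type estimate give the box mass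
`≫ (log y)^{∑ β i j}`.
-/

open Filter ProbabilityTheory Topology
open scoped ENNReal NNReal ArithmeticFunction.vonMangoldt

section ConvolutionExponential

open scoped Nat

variable {M : Type*} [AddMonoid M] [MeasurableSpace M]

/-- The `k`-fold convolution power `μ ∗ ⋯ ∗ μ`, with the unit mass at `0` for `k = 0`. -/
noncomputable def convPow (μ : Measure M) : ℕ → Measure M
  | 0 => Measure.dirac 0
  | k + 1 => μ.conv (convPow μ k)

/-- The exponential `∑ μ^{∗k} / k!` of a measure in the convolution algebra. Up to normalization
it is the compound Poisson law with jump measure `μ`. -/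
noncomputable def convExp (μ : Measure M) : Measure M :=
  Measure.sum fun k => (k ! : ℝ≥0∞)⁻¹ • convPow μ k

variable [MeasurableAdd₂ M] (μ : Measure M) [IsFiniteMeasure μ]

instance isFiniteMeasure_convPow (k : ℕ) : IsFiniteMeasure (convPow μ k) := by
  induction k with
  | zero => rw [convPow]; infer_instance
  | succ k ih => rw [convPow]; infer_instance

lemma convPow_univ (k : ℕ) : convPow μ k Set.univ = μ Set.univ ^ k := by
  induction k with
  | zero => simp [convPow]
  | succ k ih =>
    rw [convPow, Measure.conv, Measure.map_apply measurable_add .univ, Set.preimage_univ,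
      ← Set.univ_prod_univ, Measure.prod_prod, ih, pow_succ']

instance isFiniteMeasure_convExp : IsFiniteMeasure (convExp μ) := by
  have hterm (k : ℕ) : (k ! : ℝ≥0∞)⁻¹ * μ Set.univ ^ k
      = ENNReal.ofReal (μ.real Set.univ ^ k / k !) := by
    rw [ENNReal.ofReal_div_of_pos (by positivity), ENNReal.ofReal_pow measureReal_nonneg,
      ofReal_measureReal, ENNReal.ofReal_natCast, mul_comm, div_eq_mul_inv]
  refine ⟨?_⟩
  simp only [convExp, Measure.sum_apply _ MeasurableSet.univ, Measure.smul_apply, convPow_univ,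
    smul_eq_mul, hterm]
  rw [← ENNReal.ofReal_tsum_of_nonneg (fun _ => by positivity)
    (Real.summable_pow_div_factorial _)]
  exact ENNReal.ofReal_lt_top

variable {μ} {f : AddChar M ℂ}

lemma integral_convPow (hf : Measurable f) (hf1 : ∀ x, ‖f x‖ ≤ 1) (k : ℕ) :
    ∫ x, f x ∂convPow μ k = (∫ x, f x ∂μ) ^ k := by
  induction k with
  | zero => simp [convPow, integral_dirac' _ _ hf.stronglyMeasurable]
  | succ k ih =>
    rw [convPow, integral_conv (.of_bound hf.aestronglyMeasurable 1 (.of_forall hf1))]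
    simp only [f.map_add_eq_mul, integral_const_mul, integral_mul_const, ih, pow_succ']

lemma integral_convExp (hf : Measurable f) (hf1 : ∀ x, ‖f x‖ ≤ 1) :
    ∫ x, f x ∂convExp μ = Complex.exp (∫ x, f x ∂μ) := by
  have hint : Integrable f (convExp μ) := .of_bound hf.aestronglyMeasurable 1 (.of_forall hf1)
  refine (hasSum_integral_measure hint).unique ?_
  simp only [integral_smul_measure, integral_convPow hf hf1, ENNReal.toReal_inv,
    ENNReal.toReal_natCast, Complex.real_smul, ofReal_inv, ofReal_natCast, inv_mul_eq_div]
  rw [Complex.exp_eq_exp_ℂ]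
  exact NormedSpace.expSeries_div_hasSum_exp _

end ConvolutionExponential

lemma addChar_map_sum {ι A M : Type*} [AddCommMonoid A] [CommMonoid M] (ψ : AddChar A M)
    (s : Finset ι) (f : ι → A) : ψ (∑ i ∈ s, f i) = ∏ i ∈ s, ψ (f i) :=
  map_prod ψ.toMonoidHom (fun i => Multiplicative.ofAdd (f i)) s

/-- The character `u ↦ e^{-zu}` of the half-line, whose integral against a measure is the Laplace
transform at `z`. -/
noncomputable def laplaceChar (z : ℂ) : AddChar ℝ≥0 ℂ where
  toFun u := Complex.exp (-z * (u : ℝ))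
  map_zero_eq_one' := by simp
  map_add_eq_mul' u v := by rw [← Complex.exp_add]; push_cast; ring_nf

lemma laplaceChar_apply (z : ℂ) (u : ℝ≥0) : laplaceChar z u = Complex.exp (-z * (u : ℝ)) := rfl

lemma laplaceChar_add (z w : ℂ) (u : ℝ≥0) :
    laplaceChar (z + w) u = laplaceChar z u * laplaceChar w u := by
  simp only [laplaceChar_apply, ← Complex.exp_add]
  ring_nf

lemma measurable_laplaceChar (z : ℂ) : Measurable (laplaceChar z) :=
  Continuous.measurable (f := fun u : ℝ≥0 => Complex.exp (-z * (u : ℝ))) (by fun_prop)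

lemma norm_laplaceChar_le_one {z : ℂ} (hz : 0 ≤ z.re) (u : ℝ≥0) : ‖laplaceChar z u‖ ≤ 1 := by
  rw [laplaceChar_apply, Complex.norm_exp, Complex.re_mul_ofReal, Complex.neg_re,
    Real.exp_le_one_iff]
  exact mul_nonpos_of_nonpos_of_nonneg (neg_nonpos.2 hz) u.2

lemma integrable_laplaceChar {μ : Measure ℝ≥0} [IsFiniteMeasure μ] {z : ℂ} (hz : 0 ≤ z.re) :
    Integrable (laplaceChar z) μ :=
  .of_bound (measurable_laplaceChar z).aestronglyMeasurable 1
    (.of_forall (norm_laplaceChar_le_one hz))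

section ZetaMeasure

lemma logZeta_eq_LSeries (s : ℂ) :
    logZeta s = LSeries (fun n => (Λ n / Real.log n : ℂ)) s := by
  refine tsum_congr fun n => ?_
  rcases eq_or_ne n 0 with rfl | hn
  · simp
  · rw [LSeries.term_of_ne_zero hn, Complex.cpow_neg, ← div_eq_mul_inv, ofReal_div]

lemma exp_logZeta {s : ℂ} (hs : 1 < s.re) : Complex.exp (logZeta s) = riemannZeta s := by
  rw [logZeta_eq_LSeries, riemannZeta_eq_exp_LSeries hs]

lemma vonMangoldt_div_log_nonneg (n : ℕ) : 0 ≤ Λ n / Real.log n :=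
  div_nonneg ArithmeticFunction.vonMangoldt_nonneg (Real.log_natCast_nonneg n)

lemma vonMangoldt_div_log_le_one (n : ℕ) : Λ n / Real.log n ≤ 1 :=
  div_le_one_of_le₀ ArithmeticFunction.vonMangoldt_le_log (Real.log_natCast_nonneg n)

lemma summable_vonMangoldt_div_log_mul_rpow {σ : ℝ} (hσ : 1 < σ) :
    Summable fun n : ℕ => Λ n / Real.log n * (n : ℝ) ^ (-σ) :=
  .of_nonneg_of_le (fun n => mul_nonneg (vonMangoldt_div_log_nonneg n) (by positivity))
    (fun n => mul_le_of_le_one_left (by positivity) (vonMangoldt_div_log_le_one n))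
    (Real.summable_nat_rpow.2 (by linarith))

/-- The measure on the half-line with Laplace transform `z ↦ log ζ(σ + z)`: it puts mass
`Λ(n) / (log n · n^σ)` at the point `log n`. -/
noncomputable def logZetaMeasure (σ : ℝ) : Measure ℝ≥0 :=
  Measure.sum fun n : ℕ =>
    ENNReal.ofReal (Λ n / Real.log n * (n : ℝ) ^ (-σ)) • Measure.dirac (Real.log n).toNNReal

/-- The measure on the half-line with Laplace transform `z ↦ ζ^β(σ + z)`, for `β ≥ 0`. -/
noncomputable def zetaMeasure (β σ : ℝ) : Measure ℝ≥0 :=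
  convExp (β.toNNReal • logZetaMeasure σ)

variable {β σ : ℝ}

lemma isFiniteMeasure_logZetaMeasure (hσ : 1 < σ) : IsFiniteMeasure (logZetaMeasure σ) := by
  refine ⟨?_⟩
  simp only [logZetaMeasure, Measure.sum_apply _ MeasurableSet.univ, Measure.smul_apply,
    measure_univ, smul_eq_mul, mul_one]
  rw [← ENNReal.ofReal_tsum_of_nonneg
    (fun n => mul_nonneg (vonMangoldt_div_log_nonneg n) (by positivity))
    (summable_vonMangoldt_div_log_mul_rpow hσ)]
  exact ENNReal.ofReal_lt_top

lemma isFiniteMeasure_zetaMeasure (hσ : 1 < σ) : IsFiniteMeasure (zetaMeasure β σ) := by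
  have := isFiniteMeasure_logZetaMeasure hσ
  rw [zetaMeasure]
  infer_instance

lemma rpow_neg_mul_laplaceChar_log {n : ℕ} (hn : n ≠ 0) (z : ℂ) :
    (((n : ℝ) ^ (-σ) : ℝ) : ℂ) * laplaceChar z (Real.log n).toNNReal = (n : ℂ) ^ (-(σ + z)) := by
  have hn' : (n : ℂ) ≠ 0 := Nat.cast_ne_zero.2 hn
  rw [laplaceChar_apply, Real.coe_toNNReal _ (Real.log_natCast_nonneg n), neg_add,
    Complex.cpow_add _ _ hn', Complex.ofReal_cpow n.cast_nonneg,
    Complex.cpow_def_of_ne_zero hn' (-z), natCast_log, mul_comm (-z)]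
  push_cast
  rfl

lemma integral_logZetaMeasure (hσ : 1 < σ) {z : ℂ} (hz : 0 ≤ z.re) :
    ∫ u, laplaceChar z u ∂logZetaMeasure σ = logZeta (σ + z) := by
  have := isFiniteMeasure_logZetaMeasure hσ
  have hint : Integrable (laplaceChar z) (logZetaMeasure σ) := integrable_laplaceChar hz
  refine (hasSum_integral_measure hint).tsum_eq.symm.trans (tsum_congr fun n => ?_)
  rw [integral_smul_measure, integral_dirac, Complex.real_smul, ENNReal.toReal_ofReal
    (mul_nonneg (vonMangoldt_div_log_nonneg n) (by positivity)), ofReal_mul, mul_assoc]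
  rcases eq_or_ne n 0 with rfl | hn
  · simp
  · rw [rpow_neg_mul_laplaceChar_log hn]

lemma integral_zetaMeasure (hβ : 0 ≤ β) (hσ : 1 < σ) {z : ℂ} (hz : 0 ≤ z.re) :
    ∫ u, laplaceChar z u ∂zetaMeasure β σ = zetaPow β (σ + z) := by
  have := isFiniteMeasure_logZetaMeasure hσ
  rw [zetaMeasure, integral_convExp (measurable_laplaceChar z) (norm_laplaceChar_le_one hz),
    integral_smul_nnreal_measure, integral_logZetaMeasure hσ hz, NNReal.smul_def,
    Real.coe_toNNReal _ hβ, Complex.real_smul, zetaPow]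

lemma integral_exp_zetaMeasure (hβ : 0 ≤ β) (hσ : 1 < σ) {s : ℝ} (hs : 0 ≤ s) :
    ∫ u, Real.exp (-s * u) ∂zetaMeasure β σ = ‖zetaPow β (σ + s)‖ := by
  rw [← integral_zetaMeasure hβ hσ (z := s) (by simpa using hs)]
  simp only [laplaceChar_apply, ← ofReal_neg, ← ofReal_mul, ← ofReal_exp]
  rw [integral_complex_ofReal, Complex.norm_real,
    Real.norm_of_nonneg (integral_nonneg fun _ => (Real.exp_pos _).le)]

end ZetaMeasure

section LowerTail

lemma tendsto_rpow_mul_norm_zetaPow (β : ℝ) :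
    Tendsto (fun σ : ℝ => σ ^ β * ‖zetaPow β (1 + σ)‖) (𝓝[>] 0) (𝓝 1) := by
  have hline : Tendsto (fun σ : ℝ => (1 + σ : ℂ)) (𝓝[>] 0) (𝓝[≠] 1) := by
    refine tendsto_nhdsWithin_iff.2 ⟨?_, ?_⟩
    · have hcont : Continuous fun σ : ℝ => (1 + σ : ℂ) := by fun_prop
      simpa using (hcont.tendsto 0).mono_left nhdsWithin_le_nhds
    · filter_upwards [self_mem_nhdsWithin] with σ hσ
      simpa using hσ.ne'
  have hres := (riemannZeta_residue_one.comp hline).norm.rpow_const (p := β) (Or.inl (by simp))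
  rw [norm_one, Real.one_rpow] at hres
  refine hres.congr' ?_
  filter_upwards [self_mem_nhdsWithin] with σ (hσ : 0 < σ)
  have hpow : ‖zetaPow β (1 + σ)‖ = ‖riemannZeta (1 + σ)‖ ^ β := by
    rw [← exp_logZeta (by simpa using hσ), zetaPow, Complex.norm_exp, Complex.norm_exp,
      ← Real.exp_mul, Complex.re_ofReal_mul, mul_comm]
  rw [hpow, ← Real.mul_rpow hσ.le (norm_nonneg _)]
  simp [abs_of_pos hσ]

lemma tendsto_rpow_mul_norm_zetaPow_const_mul (β : ℝ) {b : ℝ} (hb : 0 < b) :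
    Tendsto (fun δ : ℝ => δ ^ β * ‖zetaPow β (1 + (b * δ : ℝ))‖) (𝓝[>] 0) (𝓝 (b ^ (-β))) := by
  have hscale : Tendsto (fun δ : ℝ => b * δ) (𝓝[>] 0) (𝓝[>] 0) := by
    refine tendsto_nhdsWithin_iff.2 ⟨?_, ?_⟩
    · simpa using ((continuous_const_mul b).tendsto 0).mono_left nhdsWithin_le_nhds
    · filter_upwards [self_mem_nhdsWithin] with δ (hδ : 0 < δ)
      exact mul_pos hb hδ
  have hlim := ((tendsto_rpow_mul_norm_zetaPow β).comp hscale).const_mul (b ^ (-β))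
  rw [mul_one] at hlim
  refine hlim.congr' ?_
  filter_upwards [self_mem_nhdsWithin] with δ (hδ : 0 < δ)
  simp only [Function.comp_apply]
  rw [Real.mul_rpow hb.le hδ.le, mul_assoc, ← mul_assoc (b ^ (-β)), ← Real.rpow_add hb,
    neg_add_cancel, Real.rpow_zero, one_mul]

/-- For `u > X` one has `e^{-su} ≤ e^{-sX/2} e^{-su/2}`, so the Laplace transform at `s/2` controls
the tail. -/
lemma integral_exp_neg_le (μ : Measure ℝ≥0) [IsFiniteMeasure μ] {s : ℝ} (hs : 0 ≤ s) (X : ℝ) :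
    ∫ u, Real.exp (-s * u) ∂μ ≤
      μ.real {u | (u : ℝ) ≤ X} + Real.exp (-(s / 2 * X)) * ∫ u, Real.exp (-(s / 2) * u) ∂μ := by
  have hint {r : ℝ} (hr : 0 ≤ r) : Integrable (fun u : ℝ≥0 => Real.exp (-r * u)) μ := by
    refine .of_bound (by fun_prop) 1 (.of_forall fun u => ?_)
    rw [Real.norm_of_nonneg (Real.exp_pos _).le, Real.exp_le_one_iff, neg_mul]
    exact neg_nonpos.2 (mul_nonneg hr u.2)
  have hset : MeasurableSet {u : ℝ≥0 | (u : ℝ) ≤ X} := measurableSet_le (by fun_prop) (by fun_prop)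
  have hind : Integrable ({u : ℝ≥0 | (u : ℝ) ≤ X}.indicator (1 : ℝ≥0 → ℝ)) μ :=
    (integrable_const (1 : ℝ)).indicator hset
  have htail := (hint (r := s / 2) (by positivity)).const_mul (Real.exp (-(s / 2 * X)))
  rw [← integral_indicator_one hset, ← integral_const_mul, ← integral_add hind htail]
  refine integral_mono (hint hs) (hind.add htail) fun u => ?_
  simp only [Set.indicator_apply, Set.mem_ofPred_eq, Pi.one_apply]
  split_ifs with hu
  · have : Real.exp (-s * u) ≤ 1 :=
      Real.exp_le_one_iff.2 (by rw [neg_mul]; exact neg_nonpos.2 (mul_nonneg hs u.2))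
    exact this.trans (le_add_of_nonneg_right (by positivity))
  · rw [zero_add, ← Real.exp_add, Real.exp_le_exp]
    nlinarith

variable {β : ℝ}

/-- The truncation at `ε / δ` wins over the tail once the Laplace transform is evaluated
at `s = Kδ` with `K` large in terms of `ε`. -/
lemma exp_mul_rpow_lt_rpow (hβ : 0 ≤ β) {ε K : ℝ} (hε : 0 < ε) (hK : K = 2 * (β + 1) / ε) :
    Real.exp (-(K * ε / 2)) * (2 + K / 2) ^ (-β) < (2 + K) ^ (-β) := by
  have hK0 : 0 < K := hK ▸ by positivity
  have hexp : Real.exp (-(K * ε / 2)) < 2 ^ (-β) := by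
    rw [Real.rpow_def_of_pos two_pos, Real.exp_lt_exp, hK]
    have := Real.log_two_lt_d9
    field_simp
    nlinarith
  calc Real.exp (-(K * ε / 2)) * (2 + K / 2) ^ (-β)
      < 2 ^ (-β) * (2 + K / 2) ^ (-β) := by gcongr
    _ = (4 + K) ^ (-β) := by
      rw [← Real.mul_rpow two_pos.le (by positivity)]
      ring_nf
    _ ≤ (2 + K) ^ (-β) :=
      Real.rpow_le_rpow_of_nonpos (by positivity) (by linarith) (by linarith)

lemma exists_eventually_le_zetaMeasure_real (hβ : 0 ≤ β) {ε : ℝ} (hε : 0 < ε) :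
    ∃ c : ℝ, 0 < c ∧ ∀ᶠ δ in 𝓝[>] 0,
      c * δ ^ (-β) ≤ (zetaMeasure β (1 + 2 * δ)).real {u | (u : ℝ) ≤ ε / δ} := by
  set K : ℝ := 2 * (β + 1) / ε with hK
  have hK0 : 0 < K := by positivity
  have hgap := sub_pos.2 (exp_mul_rpow_lt_rpow hβ hε hK)
  have hlim := (tendsto_rpow_mul_norm_zetaPow_const_mul β (b := 2 + K) (by positivity)).sub
    ((tendsto_rpow_mul_norm_zetaPow_const_mul β (b := 2 + K / 2) (by positivity)).const_mul
      (Real.exp (-(K * ε / 2))))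
  refine ⟨_, half_pos hgap, ?_⟩
  filter_upwards [hlim.eventually_const_le (half_lt_self hgap), self_mem_nhdsWithin]
    with δ hle (hδ : 0 < δ)
  have hσ : 1 < 1 + 2 * δ := by linarith
  have := isFiniteMeasure_zetaMeasure (β := β) hσ
  have htail := integral_exp_neg_le (zetaMeasure β (1 + 2 * δ)) (s := K * δ) (by positivity) (ε / δ)
  rw [integral_exp_zetaMeasure hβ hσ (by positivity),
    integral_exp_zetaMeasure hβ hσ (by positivity)] at htail
  have hX : K * δ / 2 * (ε / δ) = K * ε / 2 := by field_simp
  have harg (b : ℝ) : ((1 + 2 * δ : ℝ) : ℂ) + (b * δ : ℝ) = 1 + ((2 + b) * δ : ℝ) := by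
    push_cast; ring
  rw [hX, harg, mul_div_right_comm K δ 2, harg] at htail
  rw [Real.rpow_neg hδ.le, ← div_eq_mul_inv, div_le_iff₀ (by positivity)]
  refine hle.trans ?_
  rw [mul_left_comm, ← mul_sub, mul_comm]
  gcongr
  linarith

end LowerTail

section GammaDistribution

variable {a r δ : ℝ}

lemma gammaPDFReal_eq_max (ha : 1 < a) (r x : ℝ) :
    gammaPDFReal a r x =
      r ^ a / Real.Gamma a * max x 0 ^ (a - 1) * Real.exp (-(r * x)) := by
  rw [gammaPDFReal]
  split_ifs with hx
  · rw [max_eq_left hx]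
  · rw [max_eq_right (not_le.1 hx).le, Real.zero_rpow (by linarith), mul_zero, zero_mul]

lemma continuous_gammaPDFReal (ha : 1 < a) (r : ℝ) : Continuous (gammaPDFReal a r) := by
  rw [funext (gammaPDFReal_eq_max ha r)]
  exact (continuous_const.mul ((by fun_prop : Continuous fun x : ℝ => max x 0).rpow_const
    fun _ => Or.inr (by linarith))).mul (by fun_prop)

lemma integrable_gammaPDFReal (ha : 0 < a) (hr : 0 < r) : Integrable (gammaPDFReal a r) :=
  (lintegral_ofReal_ne_top_iff_integrable (by fun_prop)
    (.of_forall (gammaPDFReal_nonneg ha hr))).1 (by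
      simpa only [gammaPDF] using (lintegral_gammaPDF_eq_one ha hr).trans_ne ENNReal.one_ne_top)

lemma integral_gammaPDFReal (ha : 0 < a) (hr : 0 < r) : ∫ x, gammaPDFReal a r x = 1 := by
  rw [integral_eq_lintegral_of_nonneg_ae (.of_forall (gammaPDFReal_nonneg ha hr)) (by fun_prop)]
  have hone := lintegral_gammaPDF_eq_one ha hr
  simp only [gammaPDF] at hone
  rw [hone, ENNReal.toReal_one]

lemma gammaPDFReal_mul_exp (hr : 0 < r) {t : ℝ} (ht : t < r) (x : ℝ) :
    gammaPDFReal a r x * Real.exp (t * x) = (r / (r - t)) ^ a * gammaPDFReal a (r - t) x := by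
  have hrt : 0 < r - t := sub_pos.2 ht
  simp only [gammaPDFReal]
  split_ifs
  · rw [Real.div_rpow hr.le hrt.le, mul_assoc, ← Real.exp_add]
    have := (Real.rpow_pos_of_pos hrt a).ne'
    field_simp
    ring_nf
  · simp

lemma integral_gammaMeasure {E : Type*} [NormedAddCommGroup E] [NormedSpace ℝ E]
    (ha : 0 < a) (hr : 0 < r) (f : ℝ → E) :
    ∫ x, f x ∂gammaMeasure a r = ∫ x, gammaPDFReal a r x • f x := by
  rw [gammaMeasure, integral_withDensity_eq_integral_toReal_smul (by unfold gammaPDF; fun_prop)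
    (by simp [gammaPDF])]
  simp only [gammaPDF, ENNReal.toReal_ofReal (gammaPDFReal_nonneg ha hr _)]

lemma Iio_subset_integrableExpSet_gammaMeasure (ha : 0 < a) (hr : 0 < r) :
    Set.Iio r ⊆ integrableExpSet id (gammaMeasure a r) := fun t ht => by
  have hpos := gammaPDFReal_nonneg ha hr
  rw [integrableExpSet, Set.mem_ofPred_eq, gammaMeasure,
    integrable_withDensity_iff_integrable_smul' (by unfold gammaPDF; fun_prop) (by simp [gammaPDF])]
  simp only [gammaPDF, ENNReal.toReal_ofReal (hpos _), smul_eq_mul, id,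
    gammaPDFReal_mul_exp hr ht]
  exact (integrable_gammaPDFReal ha (sub_pos.2 ht)).const_mul _

lemma mgf_gammaMeasure (ha : 0 < a) (hr : 0 < r) {t : ℝ} (ht : t < r) :
    mgf id (gammaMeasure a r) t = (r / (r - t)) ^ a := by
  simp only [mgf, integral_gammaMeasure ha hr, smul_eq_mul, id, gammaPDFReal_mul_exp hr ht]
  rw [integral_const_mul, integral_gammaPDFReal ha (sub_pos.2 ht), mul_one]

lemma complexMGF_gammaMeasure (ha : 0 < a) (hr : 0 < r) {z : ℂ} (hz : z.re < r) :
    complexMGF id (gammaMeasure a r) z = (r : ℂ) ^ (a : ℂ) * (r - z) ^ (-(a : ℂ)) := by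
  have hopen : IsOpen {w : ℂ | w.re < r} := isOpen_lt Complex.continuous_re continuous_const
  have hslit : ∀ w ∈ {w : ℂ | w.re < r}, (r : ℂ) - w ∈ slitPlane := fun w hw =>
    Or.inl (by simpa using hw)
  have hcoe : Tendsto (fun x : ℝ => (x : ℂ)) (𝓝[≠] 0) (𝓝[≠] 0) :=
    tendsto_nhdsWithin_iff.2 ⟨(Complex.continuous_ofReal.tendsto' 0 0 rfl).mono_left
      nhdsWithin_le_nhds, by filter_upwards [self_mem_nhdsWithin] with x hx; simpa using hx⟩
  refine AnalyticOnNhd.eqOn_of_preconnected_of_frequently_eq (z₀ := 0)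
    (g := fun w => (r : ℂ) ^ (a : ℂ) * (r - w) ^ (-(a : ℂ)))
    (analyticOnNhd_complexMGF.mono fun w hw => ?_) (DifferentiableOn.analyticOnNhd ?_ hopen)
    (convex_halfSpace_re_lt r).isPreconnected (by simpa using hr)
    (hcoe.frequently (Eventually.frequently ?_)) hz
  · exact interior_maximal (Iio_subset_integrableExpSet_gammaMeasure ha hr) isOpen_Iio hw
  · exact fun w hw => (((differentiableAt_const _).sub differentiableAt_id).cpow_const
      (hslit w hw)).const_mul _ |>.differentiableWithinAt
  · filter_upwards [nhdsWithin_le_nhds (eventually_lt_nhds hr)] with t ht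
    have hrt : 0 ≤ r - t := (sub_pos.2 ht).le
    rw [complexMGF_ofReal, mgf_gammaMeasure ha hr ht, Real.div_rpow hr.le hrt, div_eq_mul_inv,
      ← Real.rpow_neg hrt, ofReal_mul, ofReal_cpow hr.le, ofReal_cpow hrt]
    push_cast
    rfl

lemma integrable_add_mul_I_cpow (ha : 1 < a) (hδ : 0 < δ) :
    Integrable fun t : ℝ => ((δ : ℂ) + t * I) ^ (-(a : ℂ)) := by
  have hdom := ((integrable_rpow_neg_one_add_norm_sq (E := ℝ) (μ := volume) (r := a)
    (by simpa using ha)).comp_mul_left' (R := δ⁻¹) (by positivity)).const_mul (δ ^ (-a))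
  refine hdom.mono' (Continuous.aestronglyMeasurable ?_) (.of_forall fun t => le_of_eq ?_)
  · exact (by fun_prop : Continuous fun t : ℝ => (δ : ℂ) + t * I).cpow continuous_const
      fun t => Or.inl (by simpa using hδ)
  · have hsq : δ ^ 2 + t ^ 2 = δ ^ 2 * (1 + ‖δ⁻¹ * t‖ ^ 2) := by
      rw [Real.norm_eq_abs, sq_abs]
      field_simp
    rw [← ofReal_neg, Complex.norm_cpow_real, Complex.norm_add_mul_I, hsq,
      Real.sqrt_mul (by positivity), Real.sqrt_sq hδ.le, Real.mul_rpow hδ.le (Real.sqrt_nonneg _),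
      Real.sqrt_eq_rpow, ← Real.rpow_mul (by positivity)]
    ring_nf

lemma fourier_gammaPDFReal (ha : 0 < a) (hδ : 0 < δ) (w : ℝ) :
    FourierTransform.fourier (fun v => (gammaPDFReal a δ v : ℂ)) w =
      (δ : ℂ) ^ (a : ℂ) * (δ + (2 * Real.pi * w : ℝ) * I) ^ (-(a : ℂ)) := by
  have hmgf := complexMGF_gammaMeasure ha hδ (z := -((2 * Real.pi * w : ℝ) * I)) (by simpa using hδ)
  rw [sub_neg_eq_add] at hmgf
  rw [← hmgf, Real.fourier_eq', complexMGF, integral_gammaMeasure ha hδ]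
  refine integral_congr_ae (.of_forall fun v => ?_)
  simp only [smul_eq_mul, Complex.real_smul, RCLike.inner_apply, conj_trivial, id]
  rw [mul_comm]
  push_cast
  ring_nf

/-- Fourier inversion for the gamma distribution, i.e. Laplace's integral for `1 / Γ(a)`. -/
lemma integral_cexp_mul_add_mul_I_cpow (ha : 1 < a) (hδ : 0 < δ) (v : ℝ) :
    ∫ t : ℝ, Complex.exp ((t * v : ℝ) * I) * ((δ : ℂ) + t * I) ^ (-(a : ℂ)) =
      (2 * Real.pi * δ ^ (-a) * gammaPDFReal a δ v : ℝ) := by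
  have ha0 : 0 < a := one_pos.trans ha
  have hpi : 0 < 2 * Real.pi := by positivity
  have hcont : Continuous fun v => (gammaPDFReal a δ v : ℂ) :=
    Complex.continuous_ofReal.comp (continuous_gammaPDFReal ha δ)
  have hfourier : Integrable (FourierTransform.fourier fun v => (gammaPDFReal a δ v : ℂ)) := by
    rw [funext (fourier_gammaPDFReal ha0 hδ)]
    exact ((integrable_add_mul_I_cpow ha hδ).comp_mul_left' hpi.ne').const_mul _
  have hinv := congrFun (hcont.fourierInv_fourier_eq (integrable_gammaPDFReal ha0 hδ).ofReal
    hfourier) v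
  have hscale := Measure.integral_comp_mul_left (fun t : ℝ =>
    Complex.exp ((t * v : ℝ) * I) * ((δ : ℂ) + t * I) ^ (-(a : ℂ))) (2 * Real.pi)
  rw [Real.fourierInv_eq'] at hinv
  simp only [fourier_gammaPDFReal ha0 hδ, RCLike.inner_apply, conj_trivial, smul_eq_mul,
    mul_left_comm _ ((δ : ℂ) ^ (a : ℂ)), mul_comm v, ← mul_assoc (2 * Real.pi)] at hinv
  rw [integral_const_mul, hscale, abs_of_pos (by positivity), ← ofReal_cpow hδ.le] at hinv
  have hnorm : 2 * Real.pi * δ ^ (-a) * (δ ^ a * (2 * Real.pi)⁻¹) = 1 := by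
    rw [Real.rpow_neg hδ.le]
    field_simp
  rw [ofReal_mul, ← hinv, Complex.real_smul, ← mul_assoc ((δ ^ a : ℝ) : ℂ), ← mul_assoc,
    ← ofReal_mul, ← ofReal_mul, hnorm, ofReal_one, one_mul]

end GammaDistribution

section LaplaceInversion

/-- The density, with respect to `dt`, of `(2πi)⁻¹ y^z z^{-a} dz` on the line `z = δ + it`. -/
noncomputable def perronWeight (a δ y t : ℝ) : ℂ :=
  1 / (2 * Real.pi : ℝ) * (y : ℂ) ^ ((δ : ℂ) + t * I) / ((δ : ℂ) + t * I) ^ (a : ℂ)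

/-- The value `e^{δu} (log y - u)₊^{a-1} / Γ(a)` of the inverse Laplace transform of
`e^{-(z-δ)u} z^{-a}` at `log y`. -/
noncomputable def perronDensity (a δ y : ℝ) (u : ℝ≥0) : ℝ :=
  Real.exp (δ * u) * max (Real.log y - u) 0 ^ (a - 1) / Real.Gamma a

variable {a δ y : ℝ}

lemma perronDensity_nonneg (ha : 0 < a) (δ y : ℝ) (u : ℝ≥0) : 0 ≤ perronDensity a δ y u := by
  have := Real.Gamma_pos_of_pos ha
  rw [perronDensity]
  positivity

lemma le_perronDensity (ha : 1 < a) (hδ : 0 ≤ δ) (hy : 1 ≤ y) {u : ℝ≥0}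
    (hu : (u : ℝ) ≤ Real.log y / 2) :
    (1 / 2) ^ (a - 1) / Real.Gamma a * Real.log y ^ (a - 1) ≤ perronDensity a δ y u := by
  have hlog := Real.log_nonneg hy
  have := Real.Gamma_pos_of_pos (one_pos.trans ha)
  rw [perronDensity, div_mul_eq_mul_div, ← Real.mul_rpow (by norm_num) hlog]
  have hpow : (1 / 2 * Real.log y) ^ (a - 1) ≤ max (Real.log y - u) 0 ^ (a - 1) :=
    Real.rpow_le_rpow (by positivity) (le_max_of_le_left (by linarith)) (by linarith)
  gcongr
  exact hpow.trans (le_mul_of_one_le_left (by positivity) (Real.one_le_exp (by positivity)))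

lemma perronWeight_eq (a δ : ℝ) (hy : 0 < y) (t : ℝ) :
    perronWeight a δ y t = (1 / (2 * Real.pi) * y ^ δ : ℝ) *
      (Complex.exp ((t * Real.log y : ℝ) * I) * ((δ : ℂ) + t * I) ^ (-(a : ℂ))) := by
  have hy' : (y : ℂ) ≠ 0 := ofReal_ne_zero.2 hy.ne'
  rw [perronWeight, Complex.cpow_add _ _ hy', Complex.cpow_def_of_ne_zero hy' (t * I),
    ← ofReal_log hy.le, Complex.cpow_neg, div_eq_mul_inv, ← ofReal_cpow hy.le]
  push_cast
  ring_nf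

lemma integrable_perronWeight (ha : 1 < a) (hδ : 0 < δ) (hy : 0 < y) :
    Integrable (perronWeight a δ y) := by
  rw [funext (perronWeight_eq a δ hy)]
  refine ((integrable_add_mul_I_cpow ha hδ).bdd_mul (c := 1)
    (Continuous.aestronglyMeasurable (by fun_prop)) (.of_forall fun t => ?_)).const_mul _
  exact (Complex.norm_exp_ofReal_mul_I _).le

lemma integral_perronWeight_mul_laplaceChar (ha : 1 < a) (hδ : 0 < δ) (hy : 0 < y) (u : ℝ≥0) :
    ∫ t : ℝ, perronWeight a δ y t * laplaceChar (t * I) u = perronDensity a δ y u := by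
  have hshift (t : ℝ) : perronWeight a δ y t * laplaceChar (t * I) u =
      (1 / (2 * Real.pi) * y ^ δ : ℝ) * (Complex.exp ((t * (Real.log y - u) : ℝ) * I) *
        ((δ : ℂ) + t * I) ^ (-(a : ℂ))) := by
    have hexp : Complex.exp ((t * (Real.log y - u) : ℝ) * I) =
        Complex.exp ((t * Real.log y : ℝ) * I) * laplaceChar (t * I) u := by
      rw [laplaceChar_apply, ← Complex.exp_add]
      push_cast
      ring_nf
    rw [perronWeight_eq a δ hy, hexp]
    ring
  simp only [hshift]
  rw [integral_const_mul, integral_cexp_mul_add_mul_I_cpow ha hδ, ← ofReal_mul,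
    gammaPDFReal_eq_max ha, perronDensity, Real.rpow_def_of_pos hy, Real.rpow_neg hδ.le]
  have hexp : Real.exp (δ * u) =
      Real.exp (Real.log y * δ) * Real.exp (-(δ * (Real.log y - u))) := by
    rw [← Real.exp_add]
    ring_nf
  have := (Real.rpow_pos_of_pos hδ a).ne'
  rw [hexp]
  congr 1
  field_simp

variable {ι : Type*} [Fintype ι] {α : ι → ℝ}

/-- The constant in the lower bound `le_prod_perronDensity` for a product of densities. -/
noncomputable def perronConst (α : ι → ℝ) : ℝ := ∏ i, (1 / 2) ^ (α i - 1) / Real.Gamma (α i)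

lemma perronConst_pos (hα : ∀ i, 0 < α i) : 0 < perronConst α :=
  prod_pos fun i _ => div_pos (by positivity) (Real.Gamma_pos_of_pos (hα i))

lemma le_prod_perronDensity (hα : ∀ i, 1 < α i) (hδ : 0 ≤ δ) (hy : 1 < y) {u : ι → ℝ≥0}
    (hu : ∀ i, (u i : ℝ) ≤ Real.log y / 2) :
    perronConst α * Real.log y ^ ∑ i, (α i - 1) ≤
      ∏ i, perronDensity (α i) δ y (u i) := by
  have hlog := Real.log_pos hy
  have hΓ (i : ι) := Real.Gamma_pos_of_pos (one_pos.trans (hα i))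
  rw [perronConst, Real.rpow_sum_of_pos hlog, ← prod_mul_distrib]
  exact prod_le_prod (fun i _ => by have := hΓ i; positivity)
    fun i _ => le_perronDensity (hα i) hδ hy.le (hu i)

variable {U : Type*} [MeasurableSpace U] {ρ : Measure U} {φ : ι → U → ℝ≥0}

lemma integral_prod_perronWeight_mul_laplaceChar (hα : ∀ i, 1 < α i) (hδ : 0 < δ) (hy : 0 < y)
    (u : ι → ℝ≥0) :
    ∫ t : ι → ℝ, ∏ i, (perronWeight (α i) δ y (t i) * laplaceChar (t i * I) (u i)) =
      ∏ i, (perronDensity (α i) δ y (u i) : ℂ) := by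
  rw [integral_fintype_prod_volume_eq_prod (f := fun i (x : ℝ) =>
    perronWeight (α i) δ y x * laplaceChar (x * I) (u i))]
  exact prod_congr rfl fun i _ => integral_perronWeight_mul_laplaceChar (hα i) hδ hy _

lemma measurable_prod_laplaceChar (hφ : ∀ i, Measurable (φ i)) :
    Measurable fun z : (ι → ℝ) × U => ∏ i, laplaceChar (z.1 i * I) (φ i z.2) := by
  simp only [laplaceChar_apply]
  fun_prop

lemma norm_prod_laplaceChar_le_one (t : ι → ℝ) (u : ι → ℝ≥0) :
    ‖∏ i, laplaceChar (t i * I) (u i)‖ ≤ 1 := by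
  rw [norm_prod]
  exact prod_le_one (fun _ _ => norm_nonneg _) fun i _ => norm_laplaceChar_le_one (by simp) _

variable {g : U → ℂ}

lemma integrable_prod_perronWeight_mul_laplaceChar (hα : ∀ i, 1 < α i) (hδ : 0 < δ)
    (hy : 0 < y) (hφ : ∀ i, Measurable (φ i)) (hg : Integrable g ρ) :
    Integrable (Function.uncurry fun (t : ι → ℝ) (u : U) =>
      (∏ i, (perronWeight (α i) δ y (t i) * laplaceChar (t i * I) (φ i u))) * g u)
      (volume.prod ρ) := by
  have hweight : Integrable fun t : ι → ℝ => ∏ i, perronWeight (α i) δ y (t i) :=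
    Integrable.fintype_prod (μ := fun _ => volume) fun i => integrable_perronWeight (hα i) hδ hy
  refine ((hweight.mul_prod hg).bdd_mul (c := 1)
    (measurable_prod_laplaceChar hφ).aestronglyMeasurable
    (.of_forall fun z => norm_prod_laplaceChar_le_one z.1 _)).congr (.of_forall fun z => ?_)
  simp only [Function.uncurry, prod_mul_distrib]
  ring

lemma integrable_prod_perronDensity_mul [SFinite ρ] (hα : ∀ i, 1 < α i) (hδ : 0 < δ)
    (hy : 0 < y) (hφ : ∀ i, Measurable (φ i)) (hg : Integrable g ρ) :
    Integrable (fun u => (∏ i, (perronDensity (α i) δ y (φ i u) : ℂ)) * g u) ρ := by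
  refine (integrable_prod_perronWeight_mul_laplaceChar hα hδ hy hφ hg).integral_prod_right.congr
    (.of_forall fun u => ?_)
  simp only [Function.uncurry, integral_mul_const,
    integral_prod_perronWeight_mul_laplaceChar hα hδ hy]

lemma integrable_prod_perronDensity [IsFiniteMeasure ρ] (hα : ∀ i, 1 < α i) (hδ : 0 < δ)
    (hy : 0 < y) (hφ : ∀ i, Measurable (φ i)) :
    Integrable (fun u => ∏ i, (perronDensity (α i) δ y (φ i u) : ℂ)) ρ := by
  simpa using integrable_prod_perronDensity_mul (ρ := ρ) hα hδ hy hφ (integrable_const 1)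

lemma integral_integral_prod_perronWeight_mul_laplaceChar [SFinite ρ] (hα : ∀ i, 1 < α i)
    (hδ : 0 < δ) (hy : 0 < y) (hφ : ∀ i, Measurable (φ i)) (hg : Integrable g ρ) :
    ∫ t : ι → ℝ, ∫ u,
        (∏ i, (perronWeight (α i) δ y (t i) * laplaceChar (t i * I) (φ i u))) * g u ∂ρ =
      ∫ u, (∏ i, (perronDensity (α i) δ y (φ i u) : ℂ)) * g u ∂ρ := by
  rw [integral_integral_swap (integrable_prod_perronWeight_mul_laplaceChar hα hδ hy hφ hg)]
  simp only [integral_mul_const, integral_prod_perronWeight_mul_laplaceChar hα hδ hy]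

end LaplaceInversion

section ZetaIntegral

variable {ι κ : Type*} [Fintype ι] [Fintype κ] {α : ι → ℝ} {α' : κ → ℝ} {β : ι → κ → ℝ} {δ y : ℝ}

/-- The integral of `∏ ζ^{β i j}(1 + zᵢ + wⱼ) · ∏ y^{zᵢ} zᵢ^{-α i} · ∏ y^{wⱼ} wⱼ^{-α' j}` over the
lines `Re zᵢ = Re wⱼ = δ`, each variable being integrated against `dz / 2πi`, which
is `dt / 2π` for `z = δ + it`. -/
noncomputable def zetaIntegral (α : ι → ℝ) (α' : κ → ℝ) (β : ι → κ → ℝ) (δ y : ℝ) : ℂ :=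
  ((1 / (2 * Real.pi)) ^ (Fintype.card ι + Fintype.card κ) : ℝ) *
    ∫ t : ι → ℝ, ∫ s : κ → ℝ,
      (∏ i, ∏ j, zetaPow (β i j) (1 + ((δ : ℂ) + t i * I) + ((δ : ℂ) + s j * I))) *
        (y : ℂ) ^ ((∑ i, ((δ : ℂ) + t i * I)) + ∑ j, ((δ : ℂ) + s j * I)) /
        ((∏ i, ((δ : ℂ) + t i * I) ^ (α i : ℂ)) * ∏ j, ((δ : ℂ) + s j * I) ^ (α' j : ℂ))

lemma prod_perronWeight (α : ι → ℝ) (δ : ℝ) (hy : y ≠ 0) (t : ι → ℝ) :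
    ∏ i, perronWeight (α i) δ y (t i) =
      ((1 / (2 * Real.pi)) ^ Fintype.card ι : ℝ) * (y : ℂ) ^ (∑ i, ((δ : ℂ) + t i * I)) /
        ∏ i, ((δ : ℂ) + t i * I) ^ (α i : ℂ) := by
  have hpow : (y : ℂ) ^ (∑ i, ((δ : ℂ) + t i * I)) = ∏ i, (y : ℂ) ^ ((δ : ℂ) + t i * I) := by
    simp only [Complex.cpow_def_of_ne_zero (ofReal_ne_zero.2 hy), mul_sum, Complex.exp_sum]
  simp [perronWeight, prod_div_distrib, prod_mul_distrib, hpow]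

lemma zetaIntegral_eq (α : ι → ℝ) (α' : κ → ℝ) (β : ι → κ → ℝ) (δ : ℝ) (hy : y ≠ 0) :
    zetaIntegral α α' β δ y = ∫ t : ι → ℝ, ∫ s : κ → ℝ,
      (∏ i, ∏ j, zetaPow (β i j) (1 + ((δ : ℂ) + t i * I) + ((δ : ℂ) + s j * I))) *
        ((∏ i, perronWeight (α i) δ y (t i)) * ∏ j, perronWeight (α' j) δ y (s j)) := by
  simp only [zetaIntegral, prod_perronWeight _ _ hy, ← integral_const_mul,
    Complex.cpow_add _ _ (ofReal_ne_zero.2 hy), pow_add, ofReal_mul]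
  congr! 4
  ring

/-- The product over all pairs `(i, j)` of the measures representing `ζ^{β i j}` to the right
of the line `Re s = σ`. -/
noncomputable def zetaPiMeasure (β : ι → κ → ℝ) (σ : ℝ) : Measure (ι × κ → ℝ≥0) :=
  Measure.pi fun p => zetaMeasure (β p.1 p.2) σ

lemma isFiniteMeasure_zetaPiMeasure {σ : ℝ} (hσ : 1 < σ) :
    IsFiniteMeasure (zetaPiMeasure β σ) := by
  have (p : ι × κ) : IsFiniteMeasure (zetaMeasure (β p.1 p.2) σ) := isFiniteMeasure_zetaMeasure hσ
  rw [zetaPiMeasure]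
  infer_instance

lemma prod_laplaceChar_add (z : ι → ℂ) (w : κ → ℂ) (u : ι × κ → ℝ≥0) :
    ∏ p : ι × κ, laplaceChar (z p.1 + w p.2) (u p) =
      (∏ i, laplaceChar (z i) (∑ j, u (i, j))) * ∏ j, laplaceChar (w j) (∑ i, u (i, j)) := by
  simp only [laplaceChar_add, prod_mul_distrib, addChar_map_sum]
  rw [Fintype.prod_prod_type, Fintype.prod_prod_type_right]

lemma prod_zetaPow_eq_integral (hβ : ∀ i j, 0 ≤ β i j) {σ : ℝ} (hσ : 1 < σ) {z : ι → ℂ} {w : κ → ℂ}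
    (hz : ∀ i, 0 ≤ (z i).re) (hw : ∀ j, 0 ≤ (w j).re) :
    ∏ i, ∏ j, zetaPow (β i j) (σ + (z i + w j)) =
      ∫ u, (∏ i, laplaceChar (z i) (∑ j, u (i, j))) * ∏ j, laplaceChar (w j) (∑ i, u (i, j))
        ∂zetaPiMeasure β σ := by
  have (p : ι × κ) : IsFiniteMeasure (zetaMeasure (β p.1 p.2) σ) := isFiniteMeasure_zetaMeasure hσ
  simp only [← prod_laplaceChar_add]
  rw [zetaPiMeasure, integral_fintype_prod_eq_prod
    (f := fun (p : ι × κ) v => laplaceChar (z p.1 + w p.2) v), Fintype.prod_prod_type]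
  exact prod_congr rfl fun i _ => prod_congr rfl fun j _ =>
    (integral_zetaMeasure (hβ i j) hσ (add_nonneg (hz i) (hw j))).symm

lemma prod_zetaPow_mul_prod_eq_integral (hβ : ∀ i j, 0 ≤ β i j) (hδ : 0 < δ) (f : ι → ℂ) (g : κ → ℂ)
    (t : ι → ℝ) (s : κ → ℝ) :
    (∏ i, ∏ j, zetaPow (β i j) (1 + ((δ : ℂ) + t i * I) + ((δ : ℂ) + s j * I))) *
        ((∏ i, f i) * ∏ j, g j) =
      ∫ u, (∏ j, (g j * laplaceChar (s j * I) (∑ i, u (i, j)))) *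
        ∏ i, (f i * laplaceChar (t i * I) (∑ j, u (i, j))) ∂zetaPiMeasure β (1 + 2 * δ) := by
  have hprod := prod_zetaPow_eq_integral hβ (σ := 1 + 2 * δ) (by linarith)
    (z := fun i => t i * I) (w := fun j => s j * I) (by simp) (by simp)
  have harg (i : ι) (j : κ) : (1 + ((δ : ℂ) + t i * I) + ((δ : ℂ) + s j * I)) =
      (1 + 2 * δ : ℝ) + (t i * I + s j * I) := by push_cast; ring
  simp only [harg, hprod, ← integral_mul_const, prod_mul_distrib]
  exact integral_congr_ae (.of_forall fun u => by ring)

lemma zetaIntegral_eq_integral (hα : ∀ i, 1 < α i) (hα' : ∀ j, 1 < α' j) (hβ : ∀ i j, 0 ≤ β i j)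
    (hδ : 0 < δ) (hy : 0 < y) :
    zetaIntegral α α' β δ y = (∫ u, (∏ i, perronDensity (α i) δ y (∑ j, u (i, j))) *
      ∏ j, perronDensity (α' j) δ y (∑ i, u (i, j)) ∂zetaPiMeasure β (1 + 2 * δ) : ℝ) := by
  have := isFiniteMeasure_zetaPiMeasure (β := β) (σ := 1 + 2 * δ) (by linarith)
  set ρ := zetaPiMeasure β (1 + 2 * δ)
  let G (t : ι → ℝ) (u : ι × κ → ℝ≥0) : ℂ :=
    ∏ i, (perronWeight (α i) δ y (t i) * laplaceChar (t i * I) (∑ j, u (i, j)))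
  let H (s : κ → ℝ) (u : ι × κ → ℝ≥0) : ℂ :=
    ∏ j, (perronWeight (α' j) δ y (s j) * laplaceChar (s j * I) (∑ i, u (i, j)))
  have hrow (i : ι) : Measurable fun u : ι × κ → ℝ≥0 => ∑ j, u (i, j) := by fun_prop
  have hcol (j : κ) : Measurable fun u : ι × κ → ℝ≥0 => ∑ i, u (i, j) := by fun_prop
  have hG (t : ι → ℝ) : Integrable (G t) ρ := by
    simp only [G, prod_mul_distrib]
    exact (Integrable.of_bound ((measurable_prod_laplaceChar hrow).comp
      measurable_prodMk_left).aestronglyMeasurable 1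
      (.of_forall fun u => norm_prod_laplaceChar_le_one t _)).const_mul _
  calc zetaIntegral α α' β δ y = ∫ t, ∫ s, ∫ u, H s u * G t u ∂ρ := by
        simp only [zetaIntegral_eq _ _ _ _ hy.ne', prod_zetaPow_mul_prod_eq_integral hβ hδ, G, H,
          ρ]
    _ = ∫ t, ∫ u, G t u * ∏ j, (perronDensity (α' j) δ y (∑ i, u (i, j)) : ℂ) ∂ρ := by
        simp only [mul_comm (G _ _)]
        exact integral_congr_ae (.of_forall fun t =>
          integral_integral_prod_perronWeight_mul_laplaceChar hα' hδ hy hcol (hG t))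
    _ = ∫ u, (∏ i, (perronDensity (α i) δ y (∑ j, u (i, j)) : ℂ)) *
          ∏ j, (perronDensity (α' j) δ y (∑ i, u (i, j)) : ℂ) ∂ρ :=
        integral_integral_prod_perronWeight_mul_laplaceChar hα hδ hy hrow
          (integrable_prod_perronDensity hα' hδ hy hcol)
    _ = _ := by
        rw [← integral_complex_ofReal]
        push_cast
        rfl

lemma integrable_prod_perronDensity_mul_prod {ρ : Measure (ι × κ → ℝ≥0)} [IsFiniteMeasure ρ]
    (hα : ∀ i, 1 < α i) (hα' : ∀ j, 1 < α' j) (hδ : 0 < δ) (hy : 0 < y) :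
    Integrable (fun u => (∏ i, perronDensity (α i) δ y (∑ j, u (i, j))) *
      ∏ j, perronDensity (α' j) δ y (∑ i, u (i, j))) ρ := by
  have hcol := integrable_prod_perronDensity (ρ := ρ) (φ := fun j u => ∑ i, u (i, j)) hα' hδ hy
    fun j => by fun_prop
  have hboth := integrable_prod_perronDensity_mul (φ := fun i u => ∑ j, u (i, j)) hα hδ hy
    (fun i => by fun_prop) hcol
  refine hboth.re.congr (.of_forall fun u => ?_)
  simp only [← ofReal_prod, ← ofReal_mul]
  rfl

lemma exists_eventually_le_zetaPiMeasure_real (hβ : ∀ i j, 0 ≤ β i j) {ε : ℝ} (hε : 0 < ε) :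
    ∃ c : ℝ, 0 < c ∧ ∀ᶠ δ in 𝓝[>] 0, c * δ ^ (-∑ i, ∑ j, β i j) ≤
      (zetaPiMeasure β (1 + 2 * δ)).real {u | ∀ p, (u p : ℝ) ≤ ε / δ} := by
  choose c hc hle using fun p : ι × κ => exists_eventually_le_zetaMeasure_real (hβ p.1 p.2) hε
  refine ⟨∏ p, c p, prod_pos fun p _ => hc p, ?_⟩
  filter_upwards [eventually_all.2 hle, self_mem_nhdsWithin] with δ hle (hδ : 0 < δ)
  have (p : ι × κ) : IsFiniteMeasure (zetaMeasure (β p.1 p.2) (1 + 2 * δ)) :=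
    isFiniteMeasure_zetaMeasure (by linarith)
  have hbox : {u : ι × κ → ℝ≥0 | ∀ p, (u p : ℝ) ≤ ε / δ} =
      Set.univ.pi fun _ => {v : ℝ≥0 | (v : ℝ) ≤ ε / δ} := by ext; simp
  rw [hbox, zetaPiMeasure, measureReal_def, Measure.pi_pi, ENNReal.toReal_prod,
    ← Fintype.sum_prod_type' (f := β), ← sum_neg_distrib, Real.rpow_sum_of_pos hδ,
    ← prod_mul_distrib]
  exact prod_le_prod (fun p _ => by have := hc p; positivity) fun p _ => hle p

lemma exists_eventually_le_zetaPiMeasure_real_log (hβ : ∀ i j, 0 ≤ β i j) {ε : ℝ} (hε : 0 < ε) :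
    ∃ c : ℝ, 0 < c ∧ ∀ᶠ y in atTop, c * Real.log y ^ (∑ i, ∑ j, β i j) ≤
      (zetaPiMeasure β (1 + 2 * (1 / Real.log y))).real
        {u | ∀ p, (u p : ℝ) ≤ ε * Real.log y} := by
  obtain ⟨c, hc, hev⟩ := exists_eventually_le_zetaPiMeasure_real hβ hε
  have hδ : Tendsto (fun y => 1 / Real.log y) atTop (𝓝[>] 0) := by
    simpa only [one_div, Function.comp_def] using
      tendsto_inv_atTop_nhdsGT_zero.comp Real.tendsto_log_atTop
  refine ⟨c, hc, ?_⟩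
  filter_upwards [hδ.eventually hev, eventually_gt_atTop 1] with y hle hy
  have hlog := Real.log_pos hy
  have hpow : (1 / Real.log y) ^ (-∑ i, ∑ j, β i j) = Real.log y ^ (∑ i, ∑ j, β i j) := by
    rw [one_div, Real.inv_rpow hlog.le, Real.rpow_neg hlog.le, inv_inv]
  rwa [hpow, div_div_eq_mul_div, div_one] at hle

lemma coe_sum_le_of_forall_le {τ : Type*} [Fintype τ] {v : τ → ℝ≥0} {b x : ℝ}
    (hv : ∀ k, (v k : ℝ) ≤ b) (hx : Fintype.card τ * b ≤ x) : ((∑ k, v k : ℝ≥0) : ℝ) ≤ x := by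
  push_cast
  exact (sum_le_card_nsmul _ _ _ fun k _ => hv k).trans (by simpa using hx)

lemma le_integral_prod_perronDensity {ρ : Measure (ι × κ → ℝ≥0)} [IsFiniteMeasure ρ]
    (hα : ∀ i, 1 < α i) (hα' : ∀ j, 1 < α' j) (hδ : 0 < δ) (hy : 1 < y) {b : ℝ}
    (hι : Fintype.card ι * b ≤ Real.log y / 2) (hκ : Fintype.card κ * b ≤ Real.log y / 2) :
    (perronConst α * Real.log y ^ ∑ i, (α i - 1)) *
        (perronConst α' * Real.log y ^ ∑ j, (α' j - 1)) *
        ρ.real {u | ∀ p, (u p : ℝ) ≤ b} ≤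
      ∫ u, (∏ i, perronDensity (α i) δ y (∑ j, u (i, j))) *
        ∏ j, perronDensity (α' j) δ y (∑ i, u (i, j)) ∂ρ := by
  have hpos (u : ι → ℝ≥0) : 0 ≤ ∏ i, perronDensity (α i) δ y (u i) :=
    prod_nonneg fun i _ => perronDensity_nonneg (one_pos.trans (hα i)) δ y _
  have hpos' (u : κ → ℝ≥0) : 0 ≤ ∏ j, perronDensity (α' j) δ y (u j) :=
    prod_nonneg fun j _ => perronDensity_nonneg (one_pos.trans (hα' j)) δ y _
  have hC := perronConst_pos fun i => one_pos.trans (hα i)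
  have hC' := perronConst_pos fun j => one_pos.trans (hα' j)
  have hlog := Real.log_pos hy
  refine (mul_le_mul_of_nonneg_left (measureReal_mono fun u hu => ?_) (by positivity)).trans
    (mul_meas_ge_le_integral_of_nonneg (.of_forall fun u => mul_nonneg (hpos _) (hpos' _))
      (integrable_prod_perronDensity_mul_prod hα hα' hδ (one_pos.trans hy)) _)
  exact mul_le_mul
    (le_prod_perronDensity hα hδ.le hy fun i => coe_sum_le_of_forall_le (fun j => hu (i, j)) hκ)
    (le_prod_perronDensity hα' hδ.le hy fun j => coe_sum_le_of_forall_le (fun i => hu (i, j)) hι)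
    (by positivity) (hpos _)

/-- On the box `u p ≤ ε log y` all row and column sums are at most `(log y) / 2`, and the box has
measure `≫ (log y)^{∑ β i j}`. -/
theorem zeta_integral_lower_bound_general (hα : ∀ i, 1 < α i) (hα' : ∀ j, 1 < α' j)
    (hβ : ∀ i j, 0 ≤ β i j) :
    ∃ c y₀ : ℝ, 0 < c ∧ 2 < y₀ ∧ ∀ y : ℝ, y₀ ≤ y →
      (zetaIntegral α α' β (1 / Real.log y) y).im = 0 ∧
      c * Real.log y ^ (∑ i, (α i - 1) + ∑ j, (α' j - 1) + ∑ i, ∑ j, β i j) ≤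
        (zetaIntegral α α' β (1 / Real.log y) y).re := by
  set N : ℝ := Fintype.card ι + Fintype.card κ + 1 with hN
  have hN0 : 0 < N := by positivity
  obtain ⟨c, hc, hev⟩ := exists_eventually_le_zetaPiMeasure_real_log hβ (ε := 1 / (2 * N))
    (by positivity)
  obtain ⟨y₁, hy₁⟩ := eventually_atTop.1 hev
  have hC := perronConst_pos fun i => one_pos.trans (hα i)
  have hC' := perronConst_pos fun j => one_pos.trans (hα' j)
  refine ⟨perronConst α * perronConst α' * c, max y₁ 3, by positivity,
    lt_max_of_lt_right (by norm_num), fun y hy => ?_⟩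
  have hy3 : 3 ≤ y := (le_max_right _ _).trans hy
  have hlog : 0 < Real.log y := Real.log_pos (by linarith)
  have hδ : 0 < 1 / Real.log y := by positivity
  have hbox := hy₁ y ((le_max_left _ _).trans hy)
  have := isFiniteMeasure_zetaPiMeasure (β := β) (σ := 1 + 2 * (1 / Real.log y)) (by linarith)
  have hcard {n : ℕ} (hn : (n : ℝ) ≤ N) : n * (1 / (2 * N) * Real.log y) ≤ Real.log y / 2 :=
    calc n * (1 / (2 * N) * Real.log y) ≤ N * (1 / (2 * N) * Real.log y) := by gcongr
      _ = Real.log y / 2 := by field_simp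
  rw [zetaIntegral_eq_integral hα hα' hβ hδ (by linarith), ofReal_re]
  refine ⟨ofReal_im _, le_trans ?_ (le_integral_prod_perronDensity hα hα' hδ (by linarith)
    (hcard (by rw [hN]; linarith)) (hcard (by rw [hN]; linarith)))⟩
  rw [Real.rpow_add hlog, Real.rpow_add hlog]
  calc _ = (perronConst α * Real.log y ^ ∑ i, (α i - 1)) *
          (perronConst α' * Real.log y ^ ∑ j, (α' j - 1)) *
          (c * Real.log y ^ ∑ i, ∑ j, β i j) := by ring
    _ ≤ _ := by gcongr

end ZetaIntegral

/-- **Lower bound for a positive-power `ζ` integral (Lemma 5 of Chandee–Li).**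
For real `α > 2`, `β > 0` and `m ≥ 1` there are `c > 0` and `y₀ > 2` such that for all
`y ≥ y₀` the iterated integral
`I = (1/2πi)^{2m} ∫_{(1/log y)^{2m}} ∏_{i,j≤m} ζ^β(1+z_i+z_{m+j}) · y^{z₁+⋯+z_{2m}}/(z₁^α⋯z_{2m}^α) dz⃗`
is real and satisfies `I ≥ c (log y)^{2mα + m²β − 2m}`. -/
theorem zeta_integral_lower_bound (α β : ℝ) (hα : 2 < α) (hβ : 0 < β)
    (m : ℕ) (hm : 1 ≤ m) :
    ∃ c y₀ : ℝ, 0 < c ∧ 2 < y₀ ∧ ∀ y : ℝ, y₀ ≤ y →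
      (fun I : ℂ =>
        I.im = 0 ∧
        c * Real.log y ^ (2 * (m : ℝ) * α + (m : ℝ) ^ 2 * β - 2 * (m : ℝ)) ≤ I.re)
      (((1 / (2 * Real.pi)) ^ (2 * m) : ℝ) *
        ∫ t₁ : Fin m → ℝ, ∫ t₂ : Fin m → ℝ,
          (∏ i : Fin m, ∏ j : Fin m,
            zetaPow β (1 + (((1 / Real.log y : ℝ) : ℂ) + t₁ i * Complex.I)
              + (((1 / Real.log y : ℝ) : ℂ) + t₂ j * Complex.I))) *
          (y : ℂ) ^ ((∑ i : Fin m, (((1 / Real.log y : ℝ) : ℂ) + t₁ i * Complex.I)) +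
            ∑ j : Fin m, (((1 / Real.log y : ℝ) : ℂ) + t₂ j * Complex.I)) /
          ((∏ i : Fin m, (((1 / Real.log y : ℝ) : ℂ) + t₁ i * Complex.I) ^ (α : ℂ)) *
            ∏ j : Fin m, (((1 / Real.log y : ℝ) : ℂ) + t₂ j * Complex.I) ^ (α : ℂ))) := by
  have hexp : (∑ _ : Fin m, (α - 1) + ∑ _ : Fin m, (α - 1) + ∑ _ : Fin m, ∑ _ : Fin m, β) =
      2 * (m : ℝ) * α + (m : ℝ) ^ 2 * β - 2 * (m : ℝ) := by
    simp only [sum_const, card_univ, Fintype.card_fin, nsmul_eq_mul]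
    ring
  simpa only [zetaIntegral, hexp, Fintype.card_fin, ← two_mul m] using
    zeta_integral_lower_bound_general (ι := Fin m) (κ := Fin m) (α := fun _ => α) (α' := fun _ => α)
      (β := fun _ _ => β) (fun _ => by linarith) (fun _ => by linarith) fun _ _ => hβ.le
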